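/- Let μ be a σ-finite Borel measure on ℝ^d with μ p_a < ∞ for every a > 0, and fix 0 < h < t; set s = t - h. Then ∫_{ℝ^d} ∫_{ℝ^d} | p_{sh}(x - s·u + s·r) · p_t(u - r) - p_{sh}(x - s·u) · p_t(u) | μ(du) dx → 0 as r → 0 in ℝ^d. Here s·u and s·r denote scalar multiplication of vectors, and p_{sh} is the Gaussian density with variance parameter s·h. -/

import Mathlib

open Filter MeasureTheory

/-- The standard Gaussian density `p_t(x) = (2πt)^{-d/2} exp(-|x|²/(2t))` on `ℝ^d`. -/
noncomputable def gaussDensity (d : ℕ) (t : ℝ) (x : EuclideanSpace ℝ (Fin d)) : ℝ :=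
  (2 * Real.pi * t) ^ (-(d : ℝ) / 2) * Real.exp (-‖x‖ ^ 2 / (2 * t))

theorem gaussDensity_nonneg' (d : ℕ) (t : ℝ) (ht : 0 < t) (x : EuclideanSpace ℝ (Fin d)) :
    0 ≤ gaussDensity d t x := by
  unfold gaussDensity
  have := Real.pi_pos
  positivity

theorem gaussDensity_cont (d : ℕ) (t : ℝ) : Continuous (gaussDensity d t) := by
  unfold gaussDensity
  fun_prop

theorem gaussDensity_shift (d : ℕ) (c R : ℝ) (hc : 0 < c) :
    ∃ K : ℝ, 0 ≤ K ∧ ∀ y v : EuclideanSpace ℝ (Fin d), ‖v‖ ≤ R →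
      gaussDensity d c (y + v) ≤ K * gaussDensity d (2 * c) y := by
  have hpi := Real.pi_pos
  refine ⟨(2 * Real.pi * c) ^ (-(d : ℝ) / 2) / (2 * Real.pi * (2 * c)) ^ (-(d : ℝ) / 2)
    * Real.exp (R ^ 2 / (2 * c)), by positivity, ?_⟩
  intro y v hv
  have hA : (0:ℝ) < (2 * Real.pi * (2 * c)) ^ (-(d : ℝ) / 2) := by positivity
  have hB : (0:ℝ) < (2 * Real.pi * c) ^ (-(d : ℝ) / 2) := by positivity
  unfold gaussDensity
  have key : Real.exp (-‖y + v‖ ^ 2 / (2 * c))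
      ≤ Real.exp (R ^ 2 / (2 * c)) * Real.exp (-‖y‖ ^ 2 / (2 * (2 * c))) := by
    rw [← Real.exp_add]
    apply Real.exp_le_exp.mpr
    have h1 : ‖y‖ ≤ ‖y + v‖ + ‖v‖ := by
      have := norm_sub_le (y + v) v
      simpa using this
    have h2 : ‖y‖ ^ 2 ≤ 2 * ‖y + v‖ ^ 2 + 2 * R ^ 2 := by
      have h3 : ‖y‖ ≤ ‖y + v‖ + R := by linarith
      have h4 : ‖y‖ ^ 2 ≤ (‖y + v‖ + R) ^ 2 := by gcongr
      nlinarith [sq_nonneg (‖y + v‖ - R)]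
    have : R ^ 2 / (2 * c) + -‖y‖ ^ 2 / (2 * (2 * c)) - -‖y + v‖ ^ 2 / (2 * c)
        = (2 * ‖y + v‖ ^ 2 + 2 * R ^ 2 - ‖y‖ ^ 2) / (4 * c) := by
      field_simp
      ring
    have h5 : 0 ≤ (2 * ‖y + v‖ ^ 2 + 2 * R ^ 2 - ‖y‖ ^ 2) / (4 * c) :=
      div_nonneg (by linarith) (by linarith)
    linarith
  calc _ ≤ (2 * Real.pi * c) ^ (-(d : ℝ) / 2) *
        (Real.exp (R ^ 2 / (2 * c)) * Real.exp (-‖y‖ ^ 2 / (2 * (2 * c)))) := by gcongr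
    _ = _ := by field_simp

theorem gaussDensity_lintegral_lt_top (d : ℕ) (c : ℝ) (hc : 0 < c) :
    ∫⁻ x, ENNReal.ofReal (gaussDensity d c x) < ⊤ := by
  have hi : Integrable (gaussDensity d c) := by
    unfold gaussDensity
    apply Integrable.const_mul
    have h1 := (GaussianFourier.integrable_cexp_neg_mul_sq_norm_add
      (V := EuclideanSpace ℝ (Fin d)) (b := ((1 / (2 * c) : ℝ) : ℂ))
      (by rw [Complex.ofReal_re]; positivity) 0 0).norm
    refine h1.congr (Filter.Eventually.of_forall fun x => ?_)
    simp only [Complex.norm_exp]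
    congr 1
    rw [← Complex.ofReal_pow, ← Complex.ofReal_neg, ← Complex.ofReal_mul]
    simp only [zero_mul, add_zero, Complex.ofReal_re]
    ring
  exact hi.lintegral_lt_top

/-- **L¹-continuity underlying Lemma 3.5.** Let `μ` be σ-finite on `ℝ^d` with `μ p_a < ∞`
for all `a > 0`, and fix `0 < h < t`; set `s = t - h`. Then
`∫∫ |p_{sh}(x - s·u + s·r) p_t(u - r) - p_{sh}(x - s·u) p_t(u)| μ(du) dx → 0` as `r → 0`. -/
theorem gauss_palm_L1_continuity (d : ℕ)
    (μ : Measure (EuclideanSpace ℝ (Fin d))) [SigmaFinite μ]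
    (hμ : ∀ a : ℝ, 0 < a → ∫⁻ u, ENNReal.ofReal (gaussDensity d a u) ∂μ < ⊤)
    (t h : ℝ) (hh : 0 < h) (hht : h < t) :
    Tendsto (fun r : EuclideanSpace ℝ (Fin d) =>
        ∫⁻ x, ∫⁻ u, ENNReal.ofReal
          |gaussDensity d ((t - h) * h) (x - (t - h) • u + (t - h) • r)
              * gaussDensity d t (u - r)
            - gaussDensity d ((t - h) * h) (x - (t - h) • u) * gaussDensity d t u|
          ∂μ ∂volume)
      (nhds 0) (nhds 0) := by
  have hs : 0 < t - h := by linarith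
  have ht : 0 < t := by linarith
  generalize t - h = s at hs
  have hc : 0 < s * h := by positivity
  generalize s * h = c at hc
  have c1 := gaussDensity_cont d c
  have c2 := gaussDensity_cont d t
  have c3 := gaussDensity_cont d (2 * c)
  have c4 := gaussDensity_cont d (2 * t)
  let F : EuclideanSpace ℝ (Fin d) → EuclideanSpace ℝ (Fin d) × EuclideanSpace ℝ (Fin d) →
      ENNReal := fun r z => ENNReal.ofReal
          |gaussDensity d c (z.1 - s • z.2 + s • r) * gaussDensity d t (z.2 - r)
            - gaussDensity d c (z.1 - s • z.2) * gaussDensity d t z.2|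
  have hFm : ∀ r, Measurable (F r) := fun r => by
    apply Continuous.measurable
    apply ENNReal.continuous_ofReal.comp
    fun_prop
  have e : ∀ r, ∫⁻ x, ∫⁻ u, F r (x, u) ∂μ ∂volume = ∫⁻ z, F r z ∂(volume.prod μ) := fun r =>
    (lintegral_prod _ (hFm r).aemeasurable).symm
  change Tendsto (fun r => ∫⁻ x, ∫⁻ u, F r (x, u) ∂μ ∂volume) (nhds 0) (nhds 0)
  simp_rw [e]
  obtain ⟨K, hK, hKb⟩ := gaussDensity_shift d c s hc
  obtain ⟨L, hL, hLb⟩ := gaussDensity_shift d t 1 ht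
  let B : EuclideanSpace ℝ (Fin d) × EuclideanSpace ℝ (Fin d) → ENNReal := fun z =>
    ENNReal.ofReal (2 * (K * L)) * (ENNReal.ofReal (gaussDensity d (2 * c) (z.1 - s • z.2))
      * ENNReal.ofReal (gaussDensity d (2 * t) z.2))
  have n1 := gaussDensity_nonneg' d c hc
  have n2 := gaussDensity_nonneg' d t ht
  have n3 := gaussDensity_nonneg' d (2 * c) (by linarith)
  have n4 := gaussDensity_nonneg' d (2 * t) (by linarith)
  have hm0 : Measurable fun z : EuclideanSpace ℝ (Fin d) × EuclideanSpace ℝ (Fin d) =>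
      (ENNReal.ofReal (gaussDensity d (2 * c) (z.1 - s • z.2))
      * ENNReal.ofReal (gaussDensity d (2 * t) z.2)) := by
    apply Measurable.fun_mul
    · exact (ENNReal.continuous_ofReal.comp (by fun_prop)).measurable
    · exact (ENNReal.continuous_ofReal.comp (by fun_prop)).measurable
  have hB : ∫⁻ z, B z ∂(volume.prod μ) ≠ ⊤ := by
    simp only [B]
    rw [lintegral_const_mul _ hm0]
    refine ENNReal.mul_ne_top ENNReal.ofReal_ne_top ?_
    rw [lintegral_prod_symm _ hm0.aemeasurable]
    have : ∀ u : EuclideanSpace ℝ (Fin d),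
        ∫⁻ x, ENNReal.ofReal (gaussDensity d (2 * c) (x - s • u))
          * ENNReal.ofReal (gaussDensity d (2 * t) u)
        = (∫⁻ x, ENNReal.ofReal (gaussDensity d (2 * c) x))
          * ENNReal.ofReal (gaussDensity d (2 * t) u) := fun u => by
      rw [lintegral_mul_const' _ _ ENNReal.ofReal_ne_top,
        lintegral_sub_right_eq_self (fun x => ENNReal.ofReal (gaussDensity d (2 * c) x))]
    simp_rw [this]
    have hf := (gaussDensity_lintegral_lt_top d (2 * c) (by linarith)).ne
    rw [lintegral_const_mul' _ _ hf]
    exact ENNReal.mul_ne_top hf (hμ (2 * t) (by linarith)).ne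
  have hb : ∀ r : EuclideanSpace ℝ (Fin d), ‖r‖ ≤ 1 → ∀ z, F r z ≤ B z := by
    intro r hr z
    have b : ∀ r : EuclideanSpace ℝ (Fin d), ‖r‖ ≤ 1 →
        gaussDensity d c (z.1 - s • z.2 + s • r) * gaussDensity d t (z.2 - r)
        ≤ (K * gaussDensity d (2 * c) (z.1 - s • z.2)) * (L * gaussDensity d (2 * t) z.2) := by
      intro r hr
      apply mul_le_mul
      · apply hKb
        rw [norm_smul, Real.norm_of_nonneg hs.le]
        nlinarith
      · rw [sub_eq_add_neg]
        apply hLb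
        rwa [norm_neg]
      · exact n2 _
      · exact mul_nonneg hK (n3 _)
    have b1 := b r hr
    have b0 := b 0 (by simp)
    simp only [smul_zero, add_zero, sub_zero] at b0
    have p1 := mul_nonneg (n1 (z.1 - s • z.2 + s • r)) (n2 (z.2 - r))
    have p0 := mul_nonneg (n1 (z.1 - s • z.2)) (n2 z.2)
    simp only [F, B]
    rw [← ENNReal.ofReal_mul (n3 _), ← ENNReal.ofReal_mul (by positivity)]
    apply ENNReal.ofReal_le_ofReal
    rw [abs_le]
    constructor <;> nlinarith
  have hz : ∫⁻ z, (0 : ENNReal) ∂((volume : Measure (EuclideanSpace ℝ (Fin d))).prod μ) = 0 := by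
    simp
  rw [← hz]
  refine tendsto_lintegral_filter_of_dominated_convergence B
    (Eventually.of_forall hFm) ?_ hB (Eventually.of_forall fun z => ?_)
  · filter_upwards [Metric.closedBall_mem_nhds (0 : EuclideanSpace ℝ (Fin d)) one_pos] with r hr
    exact Eventually.of_forall (hb r (by simpa using hr))
  · have hcont : Continuous fun r => F r z := by
      apply ENNReal.continuous_ofReal.comp
      fun_prop
    have := hcont.tendsto 0
    simpa [F] using this
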